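/- Let n ≥ 3 and let L = (l₀,…,l_{n−2}) be a weight vector in ℙⁿ. If Σ_{i=0}^{n−2} (i+1)·lᵢ ≤ n + 3, then L is feasible: a generic configuration of linear subspaces of weight L is maximally intersected by some rational normal curve. -/

import Mathlib

noncomputable section

/-- Projective space `ℙⁿ(ℂ)`, the projectivization of `ℂ^{n+1}`. -/
abbrev PP (k : ℕ) := Projectivization ℂ (Fin (k + 1) → ℂ)

/-- The vector of the monomials `s^k t^(n-k)`, used to parametrize rational normal curves. -/
def veron (n : ℕ) (v : Fin 2 → ℂ) : Fin (n + 1) → ℂ :=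
  fun k => v 0 ^ (k : ℕ) * v 1 ^ (n - (k : ℕ))

/-- `C ⊆ ℙⁿ` is a rational normal curve if it is the image of `[s:t] ↦ [F₀(s,t):⋯:Fₙ(s,t)]`
for a basis `F₀,…,Fₙ` of the degree-`n` binary forms; such a basis is encoded by an
invertible matrix of coefficients applied to the monomial vector `veron`. -/
def IsRNC (n : ℕ) (C : Set (PP n)) : Prop :=
  ∃ M : Matrix (Fin (n + 1)) (Fin (n + 1)) ℂ, IsUnit M.det ∧
    C = {P : PP n | ∃ v : Fin 2 → ℂ, v ≠ 0 ∧ ∃ c : ℂ, c ≠ 0 ∧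
      P.rep = c • M.mulVec (veron n v)}

/-- The linear subspace of `ℙⁿ` given as the projectivization of the column span of a matrix. -/
def projSet {n m : ℕ} (A : Matrix (Fin (n + 1)) (Fin m) ℂ) : Set (PP n) :=
  {P : PP n | P.rep ∈ Submodule.span ℂ (Set.range fun j => fun r => A r j)}

/-- A configuration of weight `L = (l₀,…,l_{n-2})`: for each `i`, `lᵢ` matrices of size
`(n+1) × (i+1)`, whose column spans give the `i`-dimensional components. -/
abbrev Config (n : ℕ) (L : Fin (n - 1) → ℕ) :=
  (i : Fin (n - 1)) → Fin (L i) → Matrix (Fin (n + 1)) (Fin (i.1 + 1)) ℂ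

/-- All matrices of the configuration have full rank. -/
def FullRank {n : ℕ} {L : Fin (n - 1) → ℕ} (A : Config n L) : Prop :=
  ∀ i j, (A i j).rank = i.1 + 1

/-- A curve `C` maximally intersects the configuration `A`: it meets every `i`-dimensional
component in exactly `i+1` distinct points. -/
def MaxIntersects {n : ℕ} {L : Fin (n - 1) → ℕ} (C : Set (PP n)) (A : Config n L) : Prop :=
  ∀ i j, (C ∩ projSet (A i j)).ncard = i.1 + 1

/-- A property `Q` holds for a generic configuration of weight `L`: there is a nonzero
polynomial in the matrix entries such that `Q` holds at every full-rank tuple of matrices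
where the polynomial does not vanish. -/
def GenHolds (n : ℕ) (L : Fin (n - 1) → ℕ) (Q : Config n L → Prop) : Prop :=
  ∃ F : MvPolynomial ((i : Fin (n - 1)) × (Fin (L i) × Fin (n + 1) × Fin (i.1 + 1))) ℂ,
    F ≠ 0 ∧ ∀ A : Config n L, FullRank A →
      MvPolynomial.eval (fun p => A p.1 p.2.1 p.2.2.1 p.2.2.2) F ≠ 0 → Q A

/-- `L` is feasible: a generic configuration of weight `L` is maximally intersected
by some rational normal curve. -/
def Feasible (n : ℕ) (L : Fin (n - 1) → ℕ) : Prop :=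
  GenHolds n L fun A => ∃ C : Set (PP n), IsRNC n C ∧ MaxIntersects C A


lemma exists_form (n : ℕ) (α β : Fin n → ℂ) :
    ∃ c : Fin (n + 1) → ℂ, ∀ v : Fin 2 → ℂ,
      ∑ k, c k * veron n v k = ∏ j, (α j * v 0 + β j * v 1) := by
  induction n with
  | zero => exact ⟨fun _ => 1, fun v => by simp [veron]⟩
  | succ n ih =>
    obtain ⟨c, hc⟩ := ih (fun j => α j.succ) (fun j => β j.succ)
    refine ⟨fun k => α 0 * (Fin.cons 0 c : Fin (n + 2) → ℂ) k
      + β 0 * (Fin.snoc c 0 : Fin (n + 2) → ℂ) k, fun v => ?_⟩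
    have h1 : ∑ k, (Fin.cons 0 c : Fin (n + 2) → ℂ) k * veron (n + 1) v k
        = v 0 * ∑ k, c k * veron n v k := by
      rw [Fin.sum_univ_succ, Finset.mul_sum]
      simp only [Fin.cons_zero, Fin.cons_succ, zero_mul, zero_add]
      refine Finset.sum_congr rfl fun k _ => ?_
      simp only [veron, Fin.val_succ]
      rw [show n + 1 - (k.1 + 1) = n - k.1 by omega, pow_succ]
      ring
    have h2 : ∑ k, (Fin.snoc c 0 : Fin (n + 2) → ℂ) k * veron (n + 1) v k
        = v 1 * ∑ k, c k * veron n v k := by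
      rw [Fin.sum_univ_castSucc, Finset.mul_sum]
      simp only [Fin.snoc_castSucc, Fin.snoc_last, zero_mul, add_zero]
      refine Finset.sum_congr rfl fun k _ => ?_
      simp only [veron, Fin.val_castSucc]
      rw [show n + 1 - k.1 = (n - k.1) + 1 by omega, pow_succ]
      ring
    rw [Fin.prod_univ_succ, ← hc v]
    simp only [add_mul, Finset.sum_add_distrib, mul_assoc]
    rw [← Finset.mul_sum, ← Finset.mul_sum, h1, h2]

lemma sep (n m : ℕ) (hm : m ≤ n) (M : Matrix (Fin (n + 1)) (Fin (n + 1)) ℂ)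
    (hM : IsUnit M.det) (y : Fin m → Fin 2 → ℂ) (col : Fin m → Fin (n + 1) → ℂ)
    (hcol : ∀ k, ∃ d : ℂ, col k = d • M.mulVec (veron n (y k)))
    (v : Fin 2 → ℂ) (hv : v ≠ 0) (hc : ∀ k, y k 1 * v 0 - y k 0 * v 1 ≠ 0) :
    M.mulVec (veron n v) ∉ Submodule.span ℂ (Set.range col) := by
  obtain ⟨a, b, hab⟩ : ∃ a b : ℂ, a * v 0 + b * v 1 ≠ 0 := by
    by_cases h0 : v 0 = 0
    · refine ⟨0, 1, fun h1 => hv ?_⟩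
      ext i; fin_cases i
      · exact h0
      · simpa using h1
    · exact ⟨1, 0, by simpa using h0⟩
  obtain ⟨c, hcc⟩ := exists_form n (fun j => if h : j.1 < m then y ⟨j, h⟩ 1 else a)
    (fun j => if h : j.1 < m then - y ⟨j, h⟩ 0 else b)
  let φ : (Fin (n + 1) → ℂ) →ₗ[ℂ] ℂ := (∑ k, c k • LinearMap.proj k) ∘ₗ (M⁻¹).mulVecLin
  have key : ∀ w, φ (M.mulVec (veron n w)) =
      ∏ j : Fin n, ((if h : j.1 < m then y ⟨j, h⟩ 1 else a) * w 0 +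
        (if h : j.1 < m then - y ⟨j, h⟩ 0 else b) * w 1) := by
    intro w
    rw [← hcc w]
    simp [φ, Matrix.mulVec_mulVec, Matrix.nonsing_inv_mul M hM]
  intro hmem
  have hle : Submodule.span ℂ (Set.range col) ≤ LinearMap.ker φ := by
    rw [Submodule.span_le]
    rintro _ ⟨k, rfl⟩
    obtain ⟨d, hd⟩ := hcol k
    simp only [SetLike.mem_coe, LinearMap.mem_ker]
    rw [hd, map_smul, key, Finset.prod_eq_zero (Finset.mem_univ (⟨k, by omega⟩ : Fin n)), smul_zero]
    simp
    ring
  have h0 := hle hmem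
  rw [LinearMap.mem_ker, key, Finset.prod_eq_zero_iff] at h0
  obtain ⟨j, -, hj⟩ := h0
  by_cases h : j.1 < m
  · simp only [h, dif_pos] at hj
    exact hc ⟨j, h⟩ (by linear_combination hj)
  · simp only [h, dif_neg, not_false_eq_true] at hj
    exact hab hj

/-- base matrix of the first points -/
def baseM {R : Type} {n : ℕ} (p : Option (Option (Fin (n + 1))) → Fin (n + 1) → R) :
    Matrix (Fin (n + 1)) (Fin (n + 1)) R := Matrix.of fun r i => p (some (some i)) r

def uu {R : Type} [CommRing R] {n : ℕ} (p : Option (Option (Fin (n + 1))) → Fin (n + 1) → R) :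
    Fin (n + 1) → R := (baseM p).adjugate.mulVec (p (some none))

def ww {R : Type} [CommRing R] {n : ℕ} (p : Option (Option (Fin (n + 1))) → Fin (n + 1) → R) :
    Fin (n + 1) → R := (baseM p).adjugate.mulVec (p none)

def GG {R : Type} [CommRing R] {n : ℕ} (p : Option (Option (Fin (n + 1))) → Fin (n + 1) → R) : R :=
  (baseM p).det * (∏ i, uu p i) * (∏ i, ww p i) *
    ∏ i, ∏ j : Fin n, (ww p (i.succAbove j) * uu p i - uu p (i.succAbove j) * ww p i)

lemma map_GG {R S : Type} [CommRing R] [CommRing S] (f : R →+* S) {n : ℕ}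
    (p : Option (Option (Fin (n + 1))) → Fin (n + 1) → R) :
    f (GG p) = GG fun k r => f (p k r) := by
  have hb : f.mapMatrix (baseM p) = baseM fun k r => f (p k r) := by
    ext i j; simp [baseM]
  have hu : ∀ i, f (uu p i) = uu (fun k r => f (p k r)) i := by
    intro i
    rw [uu, RingHom.map_mulVec, uu, ← hb, ← RingHom.map_adjugate]; rfl
  have hw : ∀ i, f (ww p i) = ww (fun k r => f (p k r)) i := by
    intro i
    rw [ww, RingHom.map_mulVec, ww, ← hb, ← RingHom.map_adjugate]; rfl
  simp only [GG, map_mul, map_prod, map_sub, hu, hw, RingHom.map_det, hb]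

def qq (n : ℕ) : Option (Option (Fin (n + 1))) → Fin (n + 1) → ℂ
  | none => fun r => ((r : ℕ) : ℂ) + 1
  | some none => fun _ => 1
  | some (some i) => Pi.single i 1

lemma GG_qq (n : ℕ) : GG (qq n) ≠ 0 := by
  have hb : baseM (qq n) = 1 := by
    ext r i
    simp [baseM, qq, Matrix.one_apply, Pi.single_apply]
  have hu : uu (qq n) = fun _ => 1 := by
    simp [uu, hb, qq]
  have hw : ww (qq n) = fun r : Fin (n + 1) => ((r : ℕ) : ℂ) + 1 := by
    simp [ww, hb, qq]
  rw [GG, hb, hu, hw]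
  simp only [Matrix.det_one, Finset.prod_const_one, one_mul, mul_one]
  refine mul_ne_zero (Finset.prod_ne_zero_iff.2 fun i _ => Nat.cast_add_one_ne_zero _) ?_
  refine Finset.prod_ne_zero_iff.2 fun i _ => Finset.prod_ne_zero_iff.2 fun j _ => ?_
  intro h
  have : (((i.succAbove j : Fin (n + 1)) : ℕ) : ℂ) = ((i : ℕ) : ℂ) := by linear_combination h
  exact Fin.succAbove_ne i j (Fin.ext (by exact_mod_cast this))

def yy {n : ℕ} (u w : Fin (n + 1) → ℂ) : Option (Option (Fin (n + 1))) → Fin 2 → ℂ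
  | none => ![0, 1]
  | some none => ![1, 0]
  | some (some i) => ![u i, w i]

lemma curve (n : ℕ) (p : Option (Option (Fin (n + 1))) → Fin (n + 1) → ℂ) (hp : GG p ≠ 0) :
    ∃ M : Matrix (Fin (n + 1)) (Fin (n + 1)) ℂ, IsUnit M.det ∧
    ∃ y : Option (Option (Fin (n + 1))) → Fin 2 → ℂ, (∀ k, y k ≠ 0) ∧
      (∀ k l, k ≠ l → y k 1 * y l 0 - y k 0 * y l 1 ≠ 0) ∧
      ∀ k, ∃ d : ℂ, d ≠ 0 ∧ M.mulVec (veron n (y k)) = d • p k := by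
  set u := uu p with hu
  set w := ww p with hw
  have hB : (baseM p).det ≠ 0 := fun h => hp (by simp [GG, h])
  have hu0 : ∀ i, u i ≠ 0 := fun i h => hp (by
    rw [GG, Finset.prod_eq_zero (Finset.mem_univ i) h]; simp)
  have hw0 : ∀ i, w i ≠ 0 := fun i h => hp (by
    rw [GG, Finset.prod_eq_zero (i := i) (f := ww p) (Finset.mem_univ i) h]; simp)
  have hx' : ∀ i (j : Fin n), w (i.succAbove j) * u i - u (i.succAbove j) * w i ≠ 0 :=
    fun i j h => hp (by
      rw [GG]
      exact mul_eq_zero_of_right _ (Finset.prod_eq_zero (Finset.mem_univ i)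
        (Finset.prod_eq_zero (Finset.mem_univ j) h)))
  have hx : ∀ i j, i ≠ j → w i * u j - u i * w j ≠ 0 := by
    intro i j hij
    obtain ⟨l, rfl⟩ := Fin.exists_succAbove_eq hij
    exact hx' j l
  choose c hc using fun i : Fin (n + 1) =>
    exists_form n (fun j => w (i.succAbove j)) (fun j => - u (i.succAbove j))
  let N : Matrix (Fin (n + 1)) (Fin (n + 1)) ℂ := Matrix.of fun i k => u i * w i * c i k
  have hN : ∀ v i, N.mulVec (veron n v) i = u i * w i *
      ∏ j, (w (i.succAbove j) * v 0 + (- u (i.succAbove j)) * v 1) := by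
    intro v i
    rw [← hc i v, Finset.mul_sum]
    simp [N, Matrix.mulVec, dotProduct, mul_assoc]
  let D : Fin (n + 1) → ℂ := fun i => u i * w i *
      ∏ j, (w (i.succAbove j) * u i + (- u (i.succAbove j)) * w i)
  have hD : ∀ i, D i ≠ 0 := fun i => mul_ne_zero (mul_ne_zero (hu0 i) (hw0 i))
    (Finset.prod_ne_zero_iff.2 fun j _ h => hx' i j (by linear_combination h))
  have hNi : ∀ i, N.mulVec (veron n ![u i, w i]) = Pi.single i (D i) := by
    intro i
    ext r
    rw [hN]
    by_cases h : r = i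
    · subst h; simp [D]
    · rw [Pi.single_eq_of_ne h]
      obtain ⟨l, hl⟩ := Fin.exists_succAbove_eq (Ne.symm h)
      rw [Finset.prod_eq_zero (Finset.mem_univ l), mul_zero]
      rw [hl]; simp; ring
  have hNdet : N.det ≠ 0 := by
    have : N * (Matrix.of fun k i => veron n ![u i, w i] k) = Matrix.diagonal D := by
      ext r i
      have := congrFun (hNi i) r
      refine (Eq.trans ?_ this).trans ?_
      · simp [Matrix.mul_apply, Matrix.mulVec, dotProduct]
      · rw [Matrix.diagonal_apply, Pi.single_apply]
        split_ifs with hri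
        · rw [hri]
        · rfl
    intro h
    have h2 := congrArg Matrix.det this
    rw [Matrix.det_mul, h, zero_mul, Matrix.det_diagonal] at h2
    exact Finset.prod_ne_zero_iff.2 (fun i _ => hD i) h2.symm
  have hBu : (baseM p).mulVec u = (baseM p).det • p (some none) := by
    rw [hu, uu, Matrix.mulVec_mulVec, Matrix.mul_adjugate, Matrix.smul_mulVec, Matrix.one_mulVec]
  have hBw : (baseM p).mulVec w = (baseM p).det • p none := by
    rw [hw, ww, Matrix.mulVec_mulVec, Matrix.mul_adjugate, Matrix.smul_mulVec, Matrix.one_mulVec]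
  refine ⟨baseM p * N, ?_, yy u w, ?_, ?_, ?_⟩
  · rw [Matrix.det_mul]; exact (mul_ne_zero hB hNdet).isUnit
  · rintro (_ | _ | i) h
    · simpa [yy] using congrFun h 1
    · simpa [yy] using congrFun h 0
    · exact hu0 i (by simpa [yy] using congrFun h 0)
  · rintro (_ | _ | i) (_ | _ | j) hij
    · exact absurd rfl hij
    · simp [yy]
    · simpa [yy] using hu0 j
    · simp [yy]
    · exact absurd rfl hij
    · simpa [yy] using hw0 j
    · simpa [yy] using hu0 i
    · simpa [yy] using hw0 i
    · simpa [yy] using hx i j (by rintro rfl; exact hij rfl)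
  · rintro (_ | _ | i)
    · refine ⟨((-1) ^ n * ∏ i, u i) * (baseM p).det, mul_ne_zero (mul_ne_zero (by simp)
        (Finset.prod_ne_zero_iff.2 fun i _ => hu0 i)) hB, ?_⟩
      have : N.mulVec (veron n ![0, 1]) = ((-1) ^ n * ∏ i, u i) • w := by
        ext r
        rw [hN, Fin.prod_univ_succAbove u r]
        simp [Finset.prod_neg]
        ring
      rw [← Matrix.mulVec_mulVec, yy, this, Matrix.mulVec_smul, hBw, smul_smul]
    · refine ⟨(∏ i, w i) * (baseM p).det, mul_ne_zero
        (Finset.prod_ne_zero_iff.2 fun i _ => hw0 i) hB, ?_⟩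
      have : N.mulVec (veron n ![1, 0]) = (∏ i, w i) • u := by
        ext r
        rw [hN, Fin.prod_univ_succAbove w r]
        simp
        ring
      rw [← Matrix.mulVec_mulVec, yy, this, Matrix.mulVec_smul, hBu, smul_smul]
    · refine ⟨D i, hD i, ?_⟩
      rw [← Matrix.mulVec_mulVec, yy, hNi]
      ext r
      simp [baseM, mul_comm]

lemma veron_smul (n : ℕ) (a : ℂ) (v : Fin 2 → ℂ) : veron n (a • v) = a ^ n • veron n v := by
  ext k
  have : a ^ n = a ^ k.1 * a ^ (n - k.1) := by rw [← pow_add]; congr 1; omega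
  simp only [veron, Pi.smul_apply, smul_eq_mul, mul_pow]
  rw [this]
  ring

lemma prop_of_cross (y v : Fin 2 → ℂ) (hy : y ≠ 0) (hv : v ≠ 0) (h : y 1 * v 0 - y 0 * v 1 = 0) :
    ∃ a : ℂ, a ≠ 0 ∧ v = a • y := by
  suffices ∃ a : ℂ, v = a • y by
    obtain ⟨a, ha⟩ := this
    refine ⟨a, ?_, ha⟩
    rintro rfl
    exact hv (by simpa using ha)
  by_cases h0 : y 0 = 0
  · have h1 : y 1 ≠ 0 := by
      intro h1
      apply hy; ext i; fin_cases i
      · exact h0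
      · exact h1
    refine ⟨v 1 / y 1, ?_⟩
    ext i; fin_cases i
    · simp only [h0, zero_mul, sub_zero, mul_eq_zero, h1, false_or] at h
      simp [h0, h]
    · simp [h1]
  · refine ⟨v 0 / y 0, ?_⟩
    ext i; fin_cases i
    · simp [h0]
    · simp; field_simp; linear_combination -h

lemma meets (n m : ℕ) (hn : 1 ≤ n) (hm : m ≤ n) (M : Matrix (Fin (n + 1)) (Fin (n + 1)) ℂ)
    (hM : IsUnit M.det) (y : Fin m → Fin 2 → ℂ) (A : Matrix (Fin (n + 1)) (Fin m) ℂ)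
    (hy : ∀ k, y k ≠ 0) (hyx : ∀ k l, k ≠ l → y k 1 * y l 0 - y k 0 * y l 1 ≠ 0)
    (hA : ∀ k, ∃ d : ℂ, d ≠ 0 ∧ M.mulVec (veron n (y k)) = d • fun r => A r k) :
    ({P : PP n | ∃ v : Fin 2 → ℂ, v ≠ 0 ∧ ∃ c : ℂ, c ≠ 0 ∧
      P.rep = c • M.mulVec (veron n v)} ∩ projSet A).ncard = m := by
  choose d hd0 hd using hA
  let col : Fin m → Fin (n + 1) → ℂ := fun k r => A r k
  have hcol : ∀ k, col k = (d k)⁻¹ • M.mulVec (veron n (y k)) := by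
    intro k
    rw [hd, smul_smul, inv_mul_cancel₀ (hd0 k), one_smul]
  have hv0 : ∀ v : Fin 2 → ℂ, v ≠ 0 → M.mulVec (veron n v) ≠ 0 := by
    intro v hv h
    refine sep n 0 (by omega) M hM (fun k => k.elim0) (fun k => k.elim0) (fun k => k.elim0) v hv
      (fun k => k.elim0) ?_
    rw [h]; exact Submodule.zero_mem _
  have hc0 : ∀ k, col k ≠ 0 := by
    intro k h
    apply hv0 _ (hy k)
    rw [hd k]; change d k • col k = 0; rw [h, smul_zero]
  let f : Fin m → PP n := fun k => Projectivization.mk ℂ (col k) (hc0 k)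
  have hf : Function.Injective f := by
    intro k l hkl
    by_contra hne
    obtain ⟨a, ha⟩ := (Projectivization.mk_eq_mk_iff' ℂ _ _ _ _).1 hkl
    refine sep n 1 hn M hM (fun _ => y l) (fun _ => col l) (fun _ => ⟨_, hcol l⟩) (y k) (hy k)
      (fun _ => hyx l k (Ne.symm hne)) ?_
    rw [hd k]
    change d k • col k ∈ _
    rw [← ha]
    exact Submodule.smul_mem _ _ (Submodule.smul_mem _ _ (Submodule.subset_span ⟨0, rfl⟩))
  have hset : {P : PP n | ∃ v : Fin 2 → ℂ, v ≠ 0 ∧ ∃ c : ℂ, c ≠ 0 ∧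
      P.rep = c • M.mulVec (veron n v)} ∩ projSet A = Set.range f := by
    ext P
    constructor
    · rintro ⟨⟨v, hv, c, hc, hP⟩, hPA⟩
      have hmem : M.mulVec (veron n v) ∈ Submodule.span ℂ (Set.range col) := by
        have h1 : P.rep ∈ Submodule.span ℂ (Set.range col) := hPA
        rw [hP] at h1
        exact (Submodule.smul_mem_iff _ hc).1 h1
      have : ∃ k, y k 1 * v 0 - y k 0 * v 1 = 0 := by
        by_contra! hcon
        exact sep n m hm M hM y col (fun k => ⟨_, hcol k⟩) v hv hcon hmem
      obtain ⟨k, hk⟩ := this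
      obtain ⟨a, ha, hva⟩ := prop_of_cross _ _ (hy k) hv hk
      refine ⟨k, ?_⟩
      rw [← P.mk_rep]
      refine ((Projectivization.mk_eq_mk_iff' ℂ _ _ _ _).2 ⟨c * a ^ n * d k, ?_⟩).symm
      rw [hP, hva, veron_smul, Matrix.mulVec_smul, hd k, smul_smul, smul_smul]
      
    · rintro ⟨k, rfl⟩
      obtain ⟨a, ha⟩ := Projectivization.exists_smul_eq_mk_rep ℂ (col k) (hc0 k)
      have ha' : (f k).rep = (a : ℂ) • col k := ha.symm
      constructor
      · refine ⟨y k, hy k, a * (d k)⁻¹, mul_ne_zero a.ne_zero (inv_ne_zero (hd0 k)), ?_⟩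
        rw [ha', hcol k, smul_smul]
      · change (f k).rep ∈ Submodule.span ℂ (Set.range col)
        rw [ha']
        exact Submodule.smul_mem _ _ (Submodule.subset_span ⟨k, rfl⟩)
  rw [hset, ← Set.image_univ, Set.ncard_image_of_injective _ hf, Set.ncard_univ, Nat.card_fin]

/-- If `Σ (i+1)·lᵢ ≤ n+3` then `L` is feasible. -/
theorem feasibility_numerical (n : ℕ) (hn : 3 ≤ n) (L : Fin (n - 1) → ℕ)
    (h : ∑ i : Fin (n - 1), (i.1 + 1) * L i ≤ n + 3) :
    Feasible n L := by
  classical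
  let S := (i : Fin (n - 1)) × (Fin (L i) × Fin (i.1 + 1))
  have hcard : Fintype.card S ≤ Fintype.card (Option (Option (Fin (n + 1)))) := by
    simp only [S, Fintype.card_sigma, Fintype.card_prod, Fintype.card_fin, Fintype.card_option]
    refine le_trans (le_of_eq (Finset.sum_congr rfl fun i _ => mul_comm _ _)) h
  obtain ⟨e⟩ := Function.Embedding.nonempty_of_card_le hcard
  let σ := (i : Fin (n - 1)) × (Fin (L i) × Fin (n + 1) × Fin (i.1 + 1))
  let pX : Option (Option (Fin (n + 1))) → Fin (n + 1) → MvPolynomial σ ℂ := fun k r =>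
    if hk : ∃ s, e s = k then MvPolynomial.X ⟨hk.choose.1, hk.choose.2.1, r, hk.choose.2.2⟩
    else MvPolynomial.C (qq n k r)
  have hpX : ∀ (s : S) r, pX (e s) r = MvPolynomial.X ⟨s.1, s.2.1, r, s.2.2⟩ := by
    intro s r
    have hk : ∃ s', e s' = e s := ⟨s, rfl⟩
    have : hk.choose = s := e.injective hk.choose_spec
    simp only [pX, hk, dif_pos]
    rw [this]
  refine ⟨GG pX, ?_, ?_⟩
  · intro h0
    apply GG_qq n
    have h1 := map_GG (MvPolynomial.eval (fun q : σ => qq n (e ⟨q.1, q.2.1, q.2.2.2⟩) q.2.2.1)) pX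
    rw [h0, map_zero] at h1
    rw [h1]
    congr 1
    funext k r
    by_cases hk : ∃ s, e s = k
    · obtain ⟨s, rfl⟩ := hk
      rw [hpX]; simp
    · simp [pX, hk]
  · intro A _ hF
    rw [map_GG] at hF
    obtain ⟨M, hM, y, hy, hyx, hd⟩ := curve n _ hF
    refine ⟨_, ⟨M, hM, rfl⟩, fun i j => ?_⟩
    have hi := i.2
    refine meets n (i.1 + 1) (by omega) (by omega) M hM (fun k => y (e ⟨i, j, k⟩)) (A i j)
      (fun k => hy _) (fun k l hkl => hyx _ _ fun he => hkl ?_) fun k => ?_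
    · have h1 := e.injective he
      rw [Sigma.mk.injEq] at h1
      exact (Prod.ext_iff.1 (eq_of_heq h1.2)).2
    · obtain ⟨d, hd0, hd⟩ := hd (e ⟨i, j, k⟩)
      refine ⟨d, hd0, hd.trans ?_⟩
      congr 1
      funext r
      rw [hpX]; simp

end
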